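/- Let X be a normal, initially κ-compact Hausdorff space with wL(X) ≤ κ and t(X) ≤ κ. Then every cover of X by G_κ sets (intersections of at most κ many open sets) has a subfamily of cardinality at most 2^κ whose union is dense in the G_κ modification X_κ, i.e., wL(X_κ) ≤ 2^κ. -/

import Mathlib

open Set Cardinal TopologicalSpace

universe u

/-- `X` is initially `κ`-compact: every open cover of size at most `κ` has a finite
subcover. -/
def InitiallyCompact (κ : Cardinal.{u}) (X : Type u) [TopologicalSpace X] : Prop :=
  ∀ 𝒰 : Set (Set X), (∀ u ∈ 𝒰, IsOpen u) → ⋃₀ 𝒰 = Set.univ → #𝒰 ≤ κ →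
    ∃ 𝒱 ⊆ 𝒰, 𝒱.Finite ∧ ⋃₀ 𝒱 = Set.univ

/-- The tightness of `X` is at most `κ`. -/
def TightnessLE (X : Type u) [TopologicalSpace X] (κ : Cardinal.{u}) : Prop :=
  ∀ (A : Set X) (x : X), x ∈ closure A → ∃ B ⊆ A, #B ≤ κ ∧ x ∈ closure B

/-- `wL(X) ≤ κ`: every open cover of `X` has a subfamily of size at most `κ` with dense
union. -/
def WLLE (X : Type u) [TopologicalSpace X] (κ : Cardinal.{u}) : Prop :=
  ∀ 𝒰 : Set (Set X), (∀ u ∈ 𝒰, IsOpen u) → ⋃₀ 𝒰 = Set.univ →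
    ∃ 𝒱 ⊆ 𝒰, #𝒱 ≤ κ ∧ Dense (⋃₀ 𝒱)

/-- `G` is a `G_κ` set: an intersection of at most `κ` many open sets. -/
def IsGKappa (κ : Cardinal.{u}) {X : Type u} [TopologicalSpace X] (G : Set X) : Prop :=
  ∃ (ι : Type u) (U : ι → Set X), #ι ≤ κ ∧ (∀ i, IsOpen (U i)) ∧ G = ⋂ i, U i

/-!
In a regular space every point of a `G_κ` set lies in a smaller regular `G_κ` set, so it suffices
to select `2 ^ κ` regular `G_κ` sets, each inside a member of the cover, that together meet every
nonempty regular `G_κ` set. For each intersection of at most `κ` closures of subsets of a set `A`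
with `#A ≤ κ`, choose one such regular `G_κ` set containing it, if there is one; this makes at most
`2 ^ κ` choices for each `A`. Tightness implies that the choices made for the small subsets `A` of
any set `S` cover `closure S`. Close off `S`, of size `2 ^ κ`, so that whenever at most `κ` of the
open sets defining these choices have a union that is not dense, its closure misses a point of `S`.

If some nonempty regular `G_κ` set were disjoint from all the choices made for `S`, then by initial
`κ`-compactness `closure S` would be covered by defining open sets that all miss one and the same
neighbourhood of it. By `wL_c(X) ≤ κ`, at most `κ` of them have a union whose closure contains `S`;
this union is dense and yet misses a nonempty open set.
-/

section ClosingOff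

variable {α β : Type u} {κ μ : Cardinal.{u}}

theorem two_pow_pow_self (hκ : ℵ₀ ≤ κ) : ((2 : Cardinal.{u}) ^ κ) ^ κ = 2 ^ κ := by
  rw [← power_mul, mul_eq_self hκ]

theorem aleph0_le_two_pow (hκ : ℵ₀ ≤ κ) : ℵ₀ ≤ (2 : Cardinal.{u}) ^ κ :=
  hκ.trans (cantor κ).le

theorem mk_biUnion_le_of_forall_le (hμ : ℵ₀ ≤ μ) {s : Set α} (hs : #s ≤ μ) {F : α → Set β}
    (hF : ∀ i ∈ s, #(F i) ≤ μ) : #(⋃ i ∈ s, F i : Set β) ≤ μ :=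
  (mk_biUnion_le F s).trans (mul_le_of_le hμ hs (ciSup_le' fun i => hF i i.2))

/-- The family `[S]^{≤κ}` of subsets of `S` of cardinality at most `κ`. -/
def subsetsOfCardLE (κ : Cardinal.{u}) (S : Set α) : Set (Set α) :=
  {A | A ⊆ S ∧ #A ≤ κ}

theorem mk_subsetsOfCardLE_le (hμ : ℵ₀ ≤ μ) (hμκ : μ ^ κ ≤ μ) {S : Set α} (hS : #S ≤ μ) :
    #(subsetsOfCardLE κ S) ≤ μ :=
  (mk_bounded_subset_le S κ).trans ((power_le_power_right (max_le hS hμ)).trans hμκ)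

theorem biUnion_mem_subsetsOfCardLE (hκ : ℵ₀ ≤ κ) {S : Set α} {s : Set β} (hs : #s ≤ κ)
    {F : β → Set α} (hF : ∀ i ∈ s, F i ∈ subsetsOfCardLE κ S) :
    ⋃ i ∈ s, F i ∈ subsetsOfCardLE κ S :=
  ⟨iUnion₂_subset fun i hi => (hF i hi).1,
    mk_biUnion_le_of_forall_le hκ hs fun i hi => (hF i hi).2⟩

theorem exists_subset_of_subset_biUnion_subsetsOfCardLE (hκ : ℵ₀ ≤ κ)
    {F : Set α → Set β} (hF : Monotone F) {S : Set α} {T : Set β} (hT : #T ≤ κ)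
    (hTF : T ⊆ ⋃ A ∈ subsetsOfCardLE κ S, F A) : ∃ A ∈ subsetsOfCardLE κ S, T ⊆ F A := by
  have hmem : ∀ t ∈ T, ∃ A ∈ subsetsOfCardLE κ S, t ∈ F A := fun t ht => by
    simpa only [mem_iUnion₂, exists_prop] using hTF ht
  choose! A hAS htA using hmem
  exact ⟨⋃ t ∈ T, A t, biUnion_mem_subsetsOfCardLE hκ hT hAS,
    fun t ht => hF (subset_biUnion_of_mem ht) (htA t ht)⟩

theorem exists_subset_range_of_mk_le [Nonempty α] {M : Type u} {s : Set α} (hs : #s ≤ #M) :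
    ∃ e : M → α, s ⊆ range e := by
  obtain ⟨f⟩ := hs
  refine ⟨Function.extend f Subtype.val fun _ => Classical.arbitrary α,
    fun x hx => ⟨f ⟨x, hx⟩, ?_⟩⟩
  rw [f.injective.extend_apply]

theorem exists_range_eq_of_mk_le {C : Type u} {A : Set α} (hA : #A ≤ #C) :
    ∃ (T : Set C) (g : T → α), range g = A := by
  obtain ⟨f⟩ := hA
  refine ⟨range f, Subtype.val ∘ (Equiv.ofInjective f f.injective).symm, ?_⟩
  rw [EquivLike.range_comp, Subtype.range_coe]

/-- The closed set consists of the values of well-founded terms: a node of such a term is labelled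
by its arity, a subset of a type of cardinality `κ`, and by a position in an enumeration of `Φ A`,
where `A` is the set of values of its children. -/
theorem exists_mk_le_forall_subsetsOfCardLE (hμ : ℵ₀ ≤ μ) (hμκ : μ ^ κ ≤ μ)
    (Φ : Set α → Set α) (hΦ : ∀ A : Set α, #A ≤ κ → #(Φ A) ≤ μ) :
    ∃ S : Set α, #S ≤ μ ∧ ∀ A ∈ subsetsOfCardLE κ S, Φ A ⊆ S := by
  obtain _ | _ := isEmpty_or_nonempty α
  · exact ⟨∅, by simp, fun _ _ x => isEmptyElim x⟩
  choose! e he using fun (A : Set α) (hA : #A ≤ κ) =>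
    exists_subset_range_of_mk_le ((hΦ A hA).trans_eq (mk_out μ).symm)
  let arity : Set κ.out × μ.out → Type u := fun a => a.1
  let eval : WType arity → α := WType.elim α fun ⟨a, g⟩ => e (range g) a.2
  have hlabels : #(Set κ.out × μ.out) ≤ μ := by
    rw [← mul_def, mk_set, mk_out, mk_out]
    have htwo : 2 ≤ μ := (natCast_lt_aleph0 (n := 2)).le.trans hμ
    exact mul_le_of_le hμ ((power_le_power_right htwo).trans hμκ) le_rfl
  have harity : ∀ a, μ ^ #(arity a) ≤ μ := fun a =>
    (power_le_power_left (aleph0_pos.trans_le hμ).ne'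
      ((mk_set_le a.1).trans_eq (mk_out κ))).trans hμκ
  refine ⟨range eval, mk_range_le.trans (WType.cardinalMk_le_of_le ?_), ?_⟩
  · exact (sum_le_sum _ _ harity).trans ((sum_const' _ _).trans_le (mul_le_of_le hμ hlabels le_rfl))
  · rintro A ⟨hAS, hA⟩ x hx
    obtain ⟨T, g, rfl⟩ := exists_range_eq_of_mk_le (hA.trans_eq (mk_out κ).symm)
    obtain ⟨m, rfl⟩ := he _ hA hx
    choose w hw using fun i => hAS (mem_range_self i)
    exact ⟨WType.mk (T, m) w, congrArg (fun h => e (range h) m) (funext hw)⟩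

end ClosingOff

section InitiallyCompact

variable {X : Type u} [TopologicalSpace X] {κ : Cardinal.{u}}

theorem InitiallyCompact.elim_directed_cover (hX : InitiallyCompact κ X) {ι : Type u} [Nonempty ι]
    (hι : #ι ≤ κ) {F : Set X} (hF : IsClosed F) {U : ι → Set X} (hU : ∀ i, IsOpen (U i))
    (hFU : F ⊆ ⋃ i, U i) (hdir : Directed (· ⊆ ·) U) : ∃ i, F ⊆ U i := by
  obtain ⟨𝒱, h𝒱, hfin, hcov⟩ := hX (range fun i => Fᶜ ∪ U i)
    (forall_mem_range.2 fun i => hF.isOpen_compl.union (hU i))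
    (by rw [sUnion_range, ← union_iUnion, ← compl_subset_iff_union, compl_compl]; exact hFU)
    (mk_range_le.trans hι)
  have := hfin.to_subtype
  choose g hg using fun V : 𝒱 => h𝒱 V.2
  obtain ⟨i, hi⟩ := hdir.finite_le g
  refine ⟨i, fun x hx => ?_⟩
  obtain ⟨V, hV, hxV⟩ : x ∈ ⋃₀ 𝒱 := hcov ▸ mem_univ x
  have hxg : x ∈ Fᶜ ∪ U (g ⟨V, hV⟩) := (hg ⟨V, hV⟩).superset hxV
  exact hi ⟨V, hV⟩ (hxg.resolve_left (not_not_intro hx))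

end InitiallyCompact

section RegularGKappa

variable {X : Type u} [TopologicalSpace X] {κ : Cardinal.{u}}

/-- A filter base `𝒩` of at most `κ` open sets whose closures have the same intersection as the
sets themselves.
Such a family presents `⋂₀ 𝒩` as a regular `G_κ` set. -/
structure IsRegularGKappaBase (κ : Cardinal.{u}) (𝒩 : Set (Set X)) : Prop where
  card_le : #𝒩 ≤ κ
  nonempty : 𝒩.Nonempty
  isOpen : ∀ N ∈ 𝒩, IsOpen N
  exists_closure_subset_inter : ∀ N ∈ 𝒩, ∀ M ∈ 𝒩, ∃ K ∈ 𝒩, closure K ⊆ N ∩ M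

theorem IsRegularGKappaBase.exists_subset_inter {𝒩 : Set (Set X)}
    (h𝒩 : IsRegularGKappaBase κ 𝒩) {N M : Set X} (hN : N ∈ 𝒩) (hM : M ∈ 𝒩) :
    ∃ K ∈ 𝒩, K ⊆ N ∧ K ⊆ M := by
  obtain ⟨K, hK, hKNM⟩ := h𝒩.exists_closure_subset_inter N hN M hM
  exact ⟨K, hK, subset_inter_iff.1 (subset_closure.trans hKNM)⟩

theorem IsRegularGKappaBase.biInter_closure_eq {𝒩 : Set (Set X)}
    (h𝒩 : IsRegularGKappaBase κ 𝒩) : ⋂ N ∈ 𝒩, closure N = ⋂₀ 𝒩 := by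
  rw [sInter_eq_biInter]
  refine Subset.antisymm (fun x hx => mem_iInter₂.2 fun N hN => ?_)
    (iInter₂_mono fun _ _ => subset_closure)
  obtain ⟨K, hK, hKN⟩ := h𝒩.exists_closure_subset_inter N hN N hN
  exact (hKN (mem_iInter₂.1 hx K hK)).1

theorem IsRegularGKappaBase.exists_disjoint (hκ : ℵ₀ ≤ κ) (hX : InitiallyCompact κ X)
    {𝒩 𝒬 : Set (Set X)} (h𝒩 : IsRegularGKappaBase κ 𝒩) (h𝒬 : IsRegularGKappaBase κ 𝒬)
    (hdisj : Disjoint (⋂₀ 𝒩) (⋂₀ 𝒬)) : ∃ N ∈ 𝒩, ∃ Q ∈ 𝒬, Disjoint N Q := by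
  have := h𝒩.nonempty.to_subtype
  have := h𝒬.nonempty.to_subtype
  obtain ⟨⟨N, Q⟩, hNQ⟩ := hX.elim_directed_cover (ι := 𝒩 × 𝒬) (F := univ)
    (U := fun i => (closure i.1 ∩ closure i.2)ᶜ)
    (by rw [← mul_def]; exact mul_le_of_le hκ h𝒩.card_le h𝒬.card_le) isClosed_univ
    (fun i => (isClosed_closure.inter isClosed_closure).isOpen_compl)
    (fun x _ => by
      by_contra hx
      simp only [mem_iUnion, mem_compl_iff, not_exists, not_not] at hx
      refine Set.disjoint_left.1 hdisj (?_ : x ∈ ⋂₀ 𝒩) ?_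
      · rw [← h𝒩.biInter_closure_eq]
        exact mem_iInter₂.2 fun N hN => (hx (⟨N, hN⟩, Classical.arbitrary _)).1
      · rw [← h𝒬.biInter_closure_eq]
        exact mem_iInter₂.2 fun Q hQ => (hx (Classical.arbitrary _, ⟨Q, hQ⟩)).2)
    (fun i j => by
      obtain ⟨N, hN, hNi, hNj⟩ := h𝒩.exists_subset_inter i.1.2 j.1.2
      obtain ⟨Q, hQ, hQi, hQj⟩ := h𝒬.exists_subset_inter i.2.2 j.2.2
      exact ⟨(⟨N, hN⟩, ⟨Q, hQ⟩),
        compl_subset_compl.2 (inter_subset_inter (closure_mono hNi) (closure_mono hQi)),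
        compl_subset_compl.2 (inter_subset_inter (closure_mono hNj) (closure_mono hQj))⟩)
  exact ⟨N, N.2, Q, Q.2, Set.disjoint_left.2 fun x hN hQ =>
    hNQ (mem_univ x) ⟨subset_closure hN, subset_closure hQ⟩⟩

theorem IsRegularGKappaBase.exists_subset_sUnion_disjoint (hX : InitiallyCompact κ X)
    {𝒬 : Set (Set X)} (h𝒬 : IsRegularGKappaBase κ 𝒬) {F : Set X} (hF : IsClosed F)
    {𝒪 : Set (Set X)} (h𝒪 : ∀ W ∈ 𝒪, IsOpen W)
    (hsep : ∀ x ∈ F, ∃ W ∈ 𝒪, x ∈ W ∧ ∃ Q ∈ 𝒬, Disjoint W Q) :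
    ∃ Q ∈ 𝒬, F ⊆ ⋃₀ {W ∈ 𝒪 | Disjoint W Q} := by
  have := h𝒬.nonempty.to_subtype
  have hanti : ∀ {Q R : Set X}, R ⊆ Q → ⋃₀ {W ∈ 𝒪 | Disjoint W Q} ⊆ ⋃₀ {W ∈ 𝒪 | Disjoint W R} :=
    fun hRQ => sUnion_mono fun _ hW => ⟨hW.1, hW.2.mono_right hRQ⟩
  obtain ⟨Q, hFQ⟩ := hX.elim_directed_cover (ι := 𝒬) h𝒬.card_le hF
    (U := fun Q => ⋃₀ {W ∈ 𝒪 | Disjoint W Q})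
    (fun Q => isOpen_sUnion fun W hW => h𝒪 W hW.1)
    (fun x hx => by
      obtain ⟨W, hW, hxW, Q, hQ, hWQ⟩ := hsep x hx
      exact mem_iUnion.2 ⟨⟨Q, hQ⟩, W, ⟨hW, hWQ⟩, hxW⟩)
    (fun Q R => by
      obtain ⟨K, hK, hKQ, hKR⟩ := h𝒬.exists_subset_inter Q.2 R.2
      exact ⟨⟨K, hK⟩, hanti hKQ, hanti hKR⟩)
  exact ⟨Q, Q.2, hFQ⟩

theorem exists_isRegularGKappaBase_of_isOpen [RegularSpace X] (hκ : ℵ₀ ≤ κ) {ι : Type u}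
    (hι : #ι ≤ κ) {U : ι → Set X} (hU : ∀ i, IsOpen (U i)) {x : X} (hx : ∀ i, x ∈ U i) :
    ∃ 𝒩, IsRegularGKappaBase κ 𝒩 ∧ x ∈ ⋂₀ 𝒩 ∧ ⋂₀ 𝒩 ⊆ ⋂ i, U i := by
  have hshrink : ∀ 𝒜 : Set (OpenNhdsOf x), 𝒜.Finite →
      ∃ K : OpenNhdsOf x, ∀ N ∈ 𝒜, closure (K : Set X) ⊆ N := fun 𝒜 h𝒜 => by
    have hmem : ⋂ N ∈ 𝒜, (N : Set X) ∈ nhds x :=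
      (Filter.biInter_mem h𝒜).2 fun N _ => N.isOpen.mem_nhds N.mem
    obtain ⟨K, ⟨hxK, hK⟩, hK𝒜⟩ := (nhds_basis_opens x).nhds_closure.mem_iff.1 hmem
    exact ⟨⟨⟨K, hK⟩, hxK⟩, subset_iInter₂_iff.1 hK𝒜⟩
  choose! shrink hshrink using hshrink
  obtain ⟨𝒮, h𝒮card, h𝒮⟩ := exists_mk_le_forall_subsetsOfCardLE (κ := 2) hκ
    (by exact_mod_cast power_nat_le (n := 2) hκ)
    (fun 𝒜 => insert (shrink 𝒜) (range fun i => (⟨⟨U i, hU i⟩, hx i⟩ : OpenNhdsOf x)))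
    (fun _ _ => mk_insert_le.trans
      (add_le_of_le hκ (mk_range_le.trans hι) (one_le_aleph0.trans hκ)))
  have hempty : ∅ ∈ subsetsOfCardLE 2 𝒮 := ⟨empty_subset _, by simp⟩
  refine ⟨(↑) '' 𝒮, ⟨mk_image_le.trans h𝒮card, ?_, ?_, ?_⟩, ?_, ?_⟩
  · exact (nonempty_of_mem (h𝒮 ∅ hempty (mem_insert _ _))).image _
  · exact forall_mem_image.2 fun N _ => N.isOpen
  · rintro _ ⟨N, hN, rfl⟩ _ ⟨M, hM, rfl⟩
    have hpair : {N, M} ∈ subsetsOfCardLE 2 𝒮 :=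
      ⟨pair_subset hN hM, mk_insert_le.trans (by rw [mk_singleton, one_add_one_eq_two])⟩
    have hK := hshrink {N, M} (toFinite _)
    exact ⟨_, mem_image_of_mem _ (h𝒮 _ hpair (mem_insert _ _)),
      subset_inter (hK N (mem_insert _ _)) (hK M (mem_insert_of_mem _ rfl))⟩
  · exact mem_sInter.2 (forall_mem_image.2 fun N _ => N.mem)
  · exact subset_iInter fun i => sInter_subset_of_mem
      (mem_image_of_mem _ (h𝒮 ∅ hempty (mem_insert_of_mem _ (mem_range_self i))))

theorem IsGKappa.exists_isRegularGKappaBase [RegularSpace X] (hκ : ℵ₀ ≤ κ) {G : Set X}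
    (hG : IsGKappa κ G) {x : X} (hx : x ∈ G) :
    ∃ 𝒩, IsRegularGKappaBase κ 𝒩 ∧ x ∈ ⋂₀ 𝒩 ∧ ⋂₀ 𝒩 ⊆ G := by
  obtain ⟨ι, U, hι, hU, rfl⟩ := hG
  exact exists_isRegularGKappaBase_of_isOpen hκ hι hU (mem_iInter.1 hx)

end RegularGKappa

section GKappaModification

variable {X : Type u} [TopologicalSpace X] {κ : Cardinal.{u}}

theorem IsGKappa.inter (hκ : ℵ₀ ≤ κ) {G H : Set X} (hG : IsGKappa κ G) (hH : IsGKappa κ H) :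
    IsGKappa κ (G ∩ H) := by
  obtain ⟨ι, U, hι, hU, rfl⟩ := hG
  obtain ⟨ι', U', hι', hU', rfl⟩ := hH
  refine ⟨ι ⊕ ι', Sum.elim U U', ?_, Sum.forall.2 ⟨hU, hU'⟩, ?_⟩
  · rw [← add_def]
    exact add_le_of_le hκ hι hι'
  · simp only [iInter_sum, Sum.elim_inl, Sum.elim_inr]

theorem isGKappa_univ : IsGKappa κ (univ : Set X) :=
  ⟨PEmpty, fun _ => univ, by simp, fun _ => isOpen_univ, by simp⟩

theorem isTopologicalBasis_isGKappa (hκ : ℵ₀ ≤ κ) :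
    @IsTopologicalBasis X (generateFrom {s : Set X | IsGKappa κ s}) {s : Set X | IsGKappa κ s} :=
  @IsTopologicalBasis.mk X (generateFrom _) _
    (fun G hG H hH _ hx => ⟨G ∩ H, IsGKappa.inter hκ hG hH, hx, Subset.rfl⟩)
    (sUnion_eq_univ_iff.2 fun x => ⟨univ, isGKappa_univ, mem_univ x⟩) rfl

end GKappaModification

section WeakLindelof

variable {X : Type u} [TopologicalSpace X] {κ : Cardinal.{u}}

/-- `wL_c(X) ≤ κ`: every cover of a closed set `F` by open subsets of `X` has a subfamily of
size at most `κ` whose union is dense in `F`. -/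
def WLcLE (X : Type u) [TopologicalSpace X] (κ : Cardinal.{u}) : Prop :=
  ∀ F : Set X, IsClosed F → ∀ 𝒰 : Set (Set X), (∀ u ∈ 𝒰, IsOpen u) → F ⊆ ⋃₀ 𝒰 →
    ∃ 𝒱 ⊆ 𝒰, #𝒱 ≤ κ ∧ F ⊆ closure (⋃₀ 𝒱)

theorem WLLE.wLcLE [NormalSpace X] (hX : WLLE X κ) : WLcLE X κ := by
  intro F hF 𝒰 h𝒰 hcov
  obtain ⟨O, hO, hFO, hO𝒰⟩ := normal_exists_closure_subset hF (isOpen_sUnion h𝒰) hcov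
  obtain ⟨𝒱, h𝒱, hcard, hdense⟩ := hX (insert (closure O)ᶜ 𝒰)
    (forall_mem_insert.2 ⟨isClosed_closure.isOpen_compl, h𝒰⟩)
    (by rw [sUnion_insert, ← compl_subset_iff_union, compl_compl]; exact hO𝒰)
  refine ⟨𝒱 ∩ 𝒰, inter_subset_right, (mk_le_mk_of_subset inter_subset_left).trans hcard, ?_⟩
  have hO𝒱 : O ∩ ⋃₀ 𝒱 ⊆ ⋃₀ (𝒱 ∩ 𝒰) := by
    rintro y ⟨hyO, v, hv, hyv⟩
    refine ⟨v, ⟨hv, (h𝒱 hv).resolve_left ?_⟩, hyv⟩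
    rintro rfl
    exact hyv (subset_closure hyO)
  exact (hFO.trans (hdense.open_subset_closure_inter hO)).trans (closure_mono hO𝒱)

end WeakLindelof

section Selection

variable {X : Type u} [TopologicalSpace X] {κ : Cardinal.{u}}

/-- The sets `⋂ B ∈ 𝒜, closure B`, where `𝒜` is a family of at most `κ` subsets of `A`. By
tightness they trace regular `G_κ` sets on closures, and a small `A` has only `2 ^ κ` of them. -/
def closureInters (κ : Cardinal.{u}) (A : Set X) : Set (Set X) :=
  (fun 𝒜 => ⋂ B ∈ 𝒜, closure B) '' subsetsOfCardLE κ (𝒫 A)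

theorem closureInters_mono : Monotone (closureInters κ : Set X → Set (Set X)) := fun _ _ hAB =>
  image_mono fun _ h𝒜 => ⟨h𝒜.1.trans (powerset_mono.2 hAB), h𝒜.2⟩

theorem mk_closureInters_le (hκ : ℵ₀ ≤ κ) {A : Set X} (hA : #A ≤ κ) :
    #(closureInters κ A) ≤ 2 ^ κ :=
  mk_image_le.trans <| mk_subsetsOfCardLE_le (aleph0_le_two_pow hκ) (two_pow_pow_self hκ).le <|
    (mk_powerset A).trans_le (power_le_power_left two_ne_zero hA)

theorem TightnessLE.exists_mem_closureInters (hκ : ℵ₀ ≤ κ) (hX : TightnessLE X κ)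
    {𝒩 : Set (Set X)} (h𝒩 : IsRegularGKappaBase κ 𝒩) {S : Set X} {x : X} (hxS : x ∈ closure S)
    (hx𝒩 : x ∈ ⋂₀ 𝒩) :
    ∃ A ∈ subsetsOfCardLE κ S, ∃ G ∈ closureInters κ A, x ∈ G ∧ G ⊆ ⋂₀ 𝒩 := by
  have htrace : ∀ N ∈ 𝒩, ∃ B ⊆ N ∩ S, #B ≤ κ ∧ x ∈ closure B := fun N hN =>
    hX (N ∩ S) x ((h𝒩.isOpen N hN).inter_closure ⟨hx𝒩 N hN, hxS⟩)
  choose! B hBsub hBcard hxB using htrace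
  refine ⟨⋃ N ∈ 𝒩, B N, biUnion_mem_subsetsOfCardLE hκ h𝒩.card_le fun N hN =>
    ⟨(hBsub N hN).trans inter_subset_right, hBcard N hN⟩, ⋂ N ∈ 𝒩, closure (B N),
    ⟨B '' 𝒩, ⟨?_, mk_image_le.trans h𝒩.card_le⟩, biInter_image⟩, mem_iInter₂.2 hxB, ?_⟩
  · exact image_subset_iff.2 fun N hN => subset_biUnion_of_mem hN
  · rw [← h𝒩.biInter_closure_eq]
    exact iInter₂_mono fun N hN => closure_mono ((hBsub N hN).trans inter_subset_left)

theorem TightnessLE.exists_selection (hκ : ℵ₀ ≤ κ) (hX : TightnessLE X κ)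
    {ℬ : Set (Set (Set X))} (hℬ : ∀ 𝒩 ∈ ℬ, IsRegularGKappaBase κ 𝒩)
    (hcov : ∀ x, ∃ 𝒩 ∈ ℬ, x ∈ ⋂₀ 𝒩) :
    ∃ 𝒱 : Set X → Set (Set (Set X)), Monotone 𝒱 ∧ (∀ A, 𝒱 A ⊆ ℬ) ∧
      (∀ A : Set X, #A ≤ κ → #(𝒱 A) ≤ 2 ^ κ) ∧
      ∀ S, ∀ x ∈ closure S, ∃ A ∈ subsetsOfCardLE κ S, ∃ 𝒩 ∈ 𝒱 A, x ∈ ⋂₀ 𝒩 := by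
  choose! r hr using fun (G : Set X) (hG : ∃ 𝒩 ∈ ℬ, G ⊆ ⋂₀ 𝒩) => hG
  refine ⟨fun A => ℬ ∩ r '' closureInters κ A,
    fun A B hAB => inter_subset_inter_right _ (image_mono (closureInters_mono hAB)),
    fun A => inter_subset_left, fun A hA => ?_, fun S x hxS => ?_⟩
  · exact (mk_le_mk_of_subset inter_subset_right).trans
      (mk_image_le.trans (mk_closureInters_le hκ hA))
  · obtain ⟨𝒩, h𝒩, hx𝒩⟩ := hcov x
    obtain ⟨A, hA, G, hG, hxG, hG𝒩⟩ := hX.exists_mem_closureInters hκ (hℬ 𝒩 h𝒩) hxS hx𝒩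
    obtain ⟨hrℬ, hGr⟩ := hr G ⟨𝒩, h𝒩, hG𝒩⟩
    exact ⟨A, hA, r G, ⟨hrℬ, mem_image_of_mem r hG⟩, hGr hxG⟩

theorem exists_mk_le_two_pow_forall_dense (hκ : ℵ₀ ≤ κ) {𝒪 : Set X → Set (Set X)}
    (h𝒪 : ∀ A : Set X, #A ≤ κ → #(𝒪 A) ≤ 2 ^ κ) :
    ∃ S : Set X, #S ≤ 2 ^ κ ∧ ∀ A ∈ subsetsOfCardLE κ S, ∀ 𝒲 ∈ subsetsOfCardLE κ (𝒪 A),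
      S ⊆ closure (⋃₀ 𝒲) → Dense (⋃₀ 𝒲) := by
  obtain _ | _ := isEmpty_or_nonempty X
  · exact ⟨∅, by simp, fun _ _ _ _ _ x => isEmptyElim x⟩
  have hpoint : ∀ D : Set X, ∃ y, y ∈ closure D → Dense D := fun D => by
    by_contra! h
    exact (h (Classical.arbitrary X)).2 fun y => (h y).1
  choose p hp using hpoint
  obtain ⟨S, hS, hSp⟩ := exists_mk_le_forall_subsetsOfCardLE (aleph0_le_two_pow hκ)
    (two_pow_pow_self hκ).le (fun A => (fun 𝒲 => p (⋃₀ 𝒲)) '' subsetsOfCardLE κ (𝒪 A))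
    fun A hA => mk_image_le.trans <|
      mk_subsetsOfCardLE_le (aleph0_le_two_pow hκ) (two_pow_pow_self hκ).le (h𝒪 A hA)
  exact ⟨S, hS, fun A hA 𝒲 h𝒲 hS𝒲 => hp _ (hS𝒲 (hSp A hA (mem_image_of_mem _ h𝒲)))⟩

theorem WLcLE.exists_subset_closure_disjoint (hκ : ℵ₀ ≤ κ) (hX : WLcLE X κ)
    (hcpt : InitiallyCompact κ X) {𝒞 : Set (Set (Set X))}
    (h𝒞 : ∀ 𝒩 ∈ 𝒞, IsRegularGKappaBase κ 𝒩) {F : Set X} (hF : IsClosed F)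
    (hF𝒞 : ∀ x ∈ F, ∃ 𝒩 ∈ 𝒞, x ∈ ⋂₀ 𝒩) {𝒬 : Set (Set X)} (h𝒬 : IsRegularGKappaBase κ 𝒬)
    (hdisj : ∀ 𝒩 ∈ 𝒞, Disjoint (⋂₀ 𝒩) (⋂₀ 𝒬)) :
    ∃ Q ∈ 𝒬, ∃ 𝒲 ∈ subsetsOfCardLE κ (⋃₀ 𝒞), F ⊆ closure (⋃₀ 𝒲) ∧ Disjoint (⋃₀ 𝒲) Q := by
  have hopen : ∀ W ∈ ⋃₀ 𝒞, IsOpen W := fun W ⟨𝒩, h𝒩, hW⟩ => (h𝒞 𝒩 h𝒩).isOpen W hW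
  have hsep : ∀ x ∈ F, ∃ W ∈ ⋃₀ 𝒞, x ∈ W ∧ ∃ Q ∈ 𝒬, Disjoint W Q := fun x hx => by
    obtain ⟨𝒩, h𝒩, hx𝒩⟩ := hF𝒞 x hx
    obtain ⟨W, hW, hWQ⟩ := (h𝒞 𝒩 h𝒩).exists_disjoint hκ hcpt h𝒬 (hdisj 𝒩 h𝒩)
    exact ⟨W, ⟨𝒩, h𝒩, hW⟩, hx𝒩 W hW, hWQ⟩
  obtain ⟨Q, hQ, hFQ⟩ := h𝒬.exists_subset_sUnion_disjoint hcpt hF hopen hsep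
  obtain ⟨𝒲, h𝒲, h𝒲card, hF𝒲⟩ := hX F hF _ (fun W hW => hopen W hW.1) hFQ
  exact ⟨Q, hQ, 𝒲, ⟨h𝒲.trans (sep_subset _ _), h𝒲card⟩, hF𝒲,
    disjoint_sUnion_left.2 fun W hW => (h𝒲 hW).2⟩

theorem exists_subfamily_meeting_isRegularGKappaBase (hκ : ℵ₀ ≤ κ) (hcpt : InitiallyCompact κ X)
    (hwl : WLcLE X κ) (ht : TightnessLE X κ) {ℬ : Set (Set (Set X))}
    (hℬ : ∀ 𝒩 ∈ ℬ, IsRegularGKappaBase κ 𝒩) (hcov : ∀ x, ∃ 𝒩 ∈ ℬ, x ∈ ⋂₀ 𝒩) :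
    ∃ 𝒞 ⊆ ℬ, #𝒞 ≤ 2 ^ κ ∧ ∀ 𝒬, IsRegularGKappaBase κ 𝒬 → (⋂₀ 𝒬).Nonempty →
      ∃ 𝒩 ∈ 𝒞, ¬Disjoint (⋂₀ 𝒩) (⋂₀ 𝒬) := by
  have hpow := aleph0_le_two_pow hκ
  obtain ⟨𝒱, h𝒱mono, h𝒱ℬ, h𝒱card, h𝒱cov⟩ := ht.exists_selection hκ hℬ hcov
  have h𝒪card : ∀ A : Set X, #A ≤ κ → #(⋃₀ 𝒱 A) ≤ 2 ^ κ := fun A hA => by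
    rw [sUnion_eq_biUnion]
    exact mk_biUnion_le_of_forall_le hpow (h𝒱card A hA)
      fun 𝒩 h𝒩 => (hℬ 𝒩 (h𝒱ℬ A h𝒩)).card_le.trans (cantor κ).le
  obtain ⟨S, hS, hSdense⟩ := exists_mk_le_two_pow_forall_dense hκ h𝒪card
  have hsub : ⋃ A ∈ subsetsOfCardLE κ S, 𝒱 A ⊆ ℬ := iUnion₂_subset fun A _ => h𝒱ℬ A
  refine ⟨⋃ A ∈ subsetsOfCardLE κ S, 𝒱 A, hsub,
    mk_biUnion_le_of_forall_le hpow (mk_subsetsOfCardLE_le hpow (two_pow_pow_self hκ).le hS)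
      fun A hA => h𝒱card A hA.2, fun 𝒬 h𝒬 hne => ?_⟩
  by_contra! hdisj
  obtain ⟨Q, hQ, 𝒲, ⟨h𝒲, h𝒲card⟩, hS𝒲, h𝒲Q⟩ := hwl.exists_subset_closure_disjoint hκ hcpt
    (fun 𝒩 h𝒩 => hℬ 𝒩 (hsub h𝒩)) isClosed_closure
    (fun x hx => by
      obtain ⟨A, hA, 𝒩, h𝒩, hx𝒩⟩ := h𝒱cov S x hx
      exact ⟨𝒩, mem_biUnion hA h𝒩, hx𝒩⟩) h𝒬 hdisj
  simp only [sUnion_iUnion] at h𝒲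
  obtain ⟨A, hA, h𝒲A⟩ := exists_subset_of_subset_biUnion_subsetsOfCardLE hκ
    (fun _ _ hAB => sUnion_mono (h𝒱mono hAB)) h𝒲card h𝒲
  have hdense : Dense (⋃₀ 𝒲) := hSdense A hA 𝒲 ⟨h𝒲A, h𝒲card⟩ (subset_closure.trans hS𝒲)
  obtain ⟨y, hyQ, hy𝒲⟩ :=
    hdense.inter_open_nonempty Q (h𝒬.isOpen Q hQ) (hne.mono (sInter_subset_of_mem hQ))
  exact Set.disjoint_left.1 h𝒲Q hy𝒲 hyQ

end Selection

theorem wL_G_kappa_modification_le_two_pow_general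
    (κ : Cardinal.{u}) (hκ : ℵ₀ ≤ κ)
    (X : Type u) [TopologicalSpace X] [RegularSpace X]
    (hcpt : InitiallyCompact κ X) (hwl : WLcLE X κ) (ht : TightnessLE X κ)
    (𝒰 : Set (Set X)) (h𝒰 : ∀ u ∈ 𝒰, IsGKappa κ u) (hcov : ⋃₀ 𝒰 = Set.univ) :
    ∃ 𝒱 ⊆ 𝒰, #𝒱 ≤ 2 ^ κ ∧
      @Dense X (TopologicalSpace.generateFrom {s : Set X | IsGKappa κ s}) (⋃₀ 𝒱) := by
  obtain ⟨𝒞, h𝒞, h𝒞card, hmeet⟩ := exists_subfamily_meeting_isRegularGKappaBase hκ hcpt hwl ht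
    (ℬ := {𝒩 | IsRegularGKappaBase κ 𝒩 ∧ ∃ u ∈ 𝒰, ⋂₀ 𝒩 ⊆ u}) (fun _ h𝒩 => h𝒩.1)
    (fun x => by
      obtain ⟨u, hu, hxu⟩ := sUnion_eq_univ_iff.1 hcov x
      obtain ⟨𝒩, h𝒩, hx𝒩, h𝒩u⟩ := (h𝒰 u hu).exists_isRegularGKappaBase hκ hxu
      exact ⟨𝒩, ⟨h𝒩, u, hu, h𝒩u⟩, hx𝒩⟩)
  choose! f hf𝒰 hsub using fun 𝒩 (h𝒩 : 𝒩 ∈ 𝒞) => (h𝒞 h𝒩).2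
  refine ⟨f '' 𝒞, image_subset_iff.2 hf𝒰, mk_image_le.trans h𝒞card,
    (@IsTopologicalBasis.dense_iff X (generateFrom _) _ (isTopologicalBasis_isGKappa hκ) _).2
      fun G hG ⟨p, hp⟩ => ?_⟩
  obtain ⟨𝒬, h𝒬, hp𝒬, h𝒬G⟩ := IsGKappa.exists_isRegularGKappaBase hκ hG hp
  obtain ⟨𝒩, h𝒩, hmeets⟩ := hmeet 𝒬 h𝒬 ⟨p, hp𝒬⟩
  obtain ⟨y, hy𝒩, hy𝒬⟩ := not_disjoint_iff.1 hmeets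
  exact ⟨y, h𝒬G hy𝒬, f 𝒩, mem_image_of_mem f h𝒩, hsub 𝒩 h𝒩 hy𝒩⟩

/-- Let `X` be a normal, initially `κ`-compact Hausdorff space with `wL(X) ≤ κ` and
tightness at most `κ`. Then every cover of `X` by `G_κ` sets has a subfamily of cardinality
at most `2^κ` whose union is dense in the `G_κ` modification `X_κ`, i.e. `wL(X_κ) ≤ 2^κ`. -/
theorem wL_G_kappa_modification_le_two_pow
    (κ : Cardinal.{u}) (hκ : ℵ₀ ≤ κ)
    (X : Type u) [TopologicalSpace X] [T2Space X] [NormalSpace X]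
    (hcpt : InitiallyCompact κ X) (hwl : WLLE X κ) (ht : TightnessLE X κ)
    (𝒰 : Set (Set X)) (h𝒰 : ∀ u ∈ 𝒰, IsGKappa κ u) (hcov : ⋃₀ 𝒰 = Set.univ) :
    ∃ 𝒱 ⊆ 𝒰, #𝒱 ≤ 2 ^ κ ∧
      @Dense X (TopologicalSpace.generateFrom {s : Set X | IsGKappa κ s}) (⋃₀ 𝒱) := by
  exact wL_G_kappa_modification_le_two_pow_general κ hκ X hcpt hwl.wLcLE ht 𝒰 h𝒰 hcov
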